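/- arXiv:1508.04589 — 4 statements merged into one kernel-verified Lean document; each statement's English description precedes it below -/
import Mathlib

section
/- There exists a unique real number α > 0 satisfying 1 + e^{−α} − α = 0. Moreover, if for each integer m ≥ 3, Q_m ∈ (0,1) denotes the unique root of 1 + Q^m − ((1−Q²)/2)m = 0 in (0,1), then m(1 − Q_m) → α as m → ∞; in particular Q_m ≈ 1 − α/m for large m. -/
lemma aux_pow (p q : ℝ) (hq : 0 ≤ q) (hqp : q ≤ p) (hp : p ≤ 1) (m : ℕ) :
    p ^ m - q ^ m ≤ m * (p - q) := by
  induction m with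
  | zero => simp
  | succ k ih =>
    have h1 : q ^ k ≤ 1 := pow_le_one₀ hq (hqp.trans hp)
    have h3 : q ^ k ≤ p ^ k := pow_le_pow_left₀ hq hqp k
    have e : p ^ (k+1) - q ^ (k+1) = p * (p ^ k - q ^ k) + q ^ k * (p - q) := by ring
    rw [e]; push_cast
    nlinarith [mul_nonneg (sub_nonneg.2 h1) (sub_nonneg.2 hqp),
      mul_nonneg (sub_nonneg.2 hp) (sub_nonneg.2 h3)]

lemma aux_g (x y : ℝ) (hxy : x ≤ y) :
    y - x ≤ (y - 1 - Real.exp (-y)) - (x - 1 - Real.exp (-x)) := by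
  have : Real.exp (-y) ≤ Real.exp (-x) := Real.exp_le_exp.2 (by linarith)
  linarith

lemma aux_exp (u : ℝ) (hu : 0 ≤ u) : Real.exp (-u) ≤ 1 - u + u ^ 2 := by
  have h1 : u + 1 ≤ Real.exp u := Real.add_one_le_exp u
  have h2 : Real.exp (-u) * Real.exp u = 1 := by rw [← Real.exp_add]; simp
  have h3 := Real.exp_pos (-u)
  have h4 : Real.exp (-u) * (u + 1) ≤ 1 := by nlinarith
  have h5 : 0 ≤ u ^ 3 := by positivity
  by_contra h
  push Not at h
  nlinarith

lemma aux_main (m : ℕ) (hm : 3 ≤ m) (q a : ℝ) (h0 : 0 < q) (h1 : q < 1)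
    (h : 1 + q ^ m - (1 - q ^ 2) / 2 * m = 0) (ha : 1 + Real.exp (-a) - a = 0) :
    |(m : ℝ) * (1 - q) - a| ≤ 16 / m := by
  have hm0 : (0:ℝ) < m := by exact_mod_cast (by omega : 0 < m)
  have hqm : q ^ m ≤ 1 := pow_le_one₀ h0.le h1.le
  set u := 1 - q with hu
  have hqu : q = 1 - u := by rw [hu]; ring
  have hu0 : 0 < u := by linarith
  have hx : (m : ℝ) * u ≤ 4 := by nlinarith [mul_pos (mul_pos hm0 hu0) h0]
  have hx0 : 0 < (m : ℝ) * u := by positivity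
  have he1 : q ≤ Real.exp (-u) := by linarith [Real.add_one_le_exp (-u)]
  have he2 : Real.exp (-u) ≤ 1 := Real.exp_le_one_iff.2 (by linarith)
  have he3 : Real.exp (-u) ^ m = Real.exp (-(m * u)) := by
    rw [← Real.exp_nat_mul]; congr 1; ring
  have hA := aux_pow _ _ h0.le he1 he2 m
  have hB : q ^ m ≤ Real.exp (-u) ^ m := pow_le_pow_left₀ h0.le he1 m
  rw [he3] at hA hB
  have hC := aux_exp u hu0.le
  have hD : (m : ℝ) * u ^ 2 ≤ 16 / m := by
    rw [le_div_iff₀ hm0]; nlinarith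
  have hE : (m:ℝ) * (Real.exp (-u) - q) ≤ m * u ^ 2 :=
    mul_le_mul_of_nonneg_left (by linarith) hm0.le
  have hF : (m:ℝ) * u - 1 = q ^ m + m * u ^ 2 / 2 := by
    have : (1 - q ^ 2) / 2 * m = m * u - m * u ^ 2 / 2 := by rw [hqu]; ring
    linarith
  have hG : 0 ≤ (m : ℝ) * u ^ 2 := by positivity
  rw [abs_le]
  rcases le_total ((m : ℝ) * u) a with hc | hc
  · have := aux_g _ _ hc
    constructor <;> linarith
  · have := aux_g _ _ hc
    constructor <;> linarith

/-- There exists a unique `a > 0` with `1 + e^{-a} - a = 0`, and if for each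
integer `m ≥ 3`, `Q m ∈ (0,1)` denotes the unique root of
`1 + Q^m - ((1 - Q^2)/2) m = 0` in `(0,1)`, then `m (1 - Q m) → a` as `m → ∞`. -/
theorem Qm_asymptotic_behavior (Q : ℕ → ℝ)
    (hQ : ∀ m : ℕ, 3 ≤ m → Q m ∈ Set.Ioo (0:ℝ) 1 ∧
      1 + Q m ^ m - (1 - Q m ^ 2) / 2 * m = 0) :
    (∃! a : ℝ, 0 < a ∧ 1 + Real.exp (-a) - a = 0) ∧
    (∀ a : ℝ, 0 < a → 1 + Real.exp (-a) - a = 0 →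
      Filter.Tendsto (fun m : ℕ => (m : ℝ) * (1 - Q m)) Filter.atTop (nhds a)) := by
  constructor
  · have hc : ContinuousOn (fun a : ℝ => a - 1 - Real.exp (-a)) (Set.Icc 0 2) := by fun_prop
    have h2 : Real.exp (-2) ≤ 1 := Real.exp_le_one_iff.2 (by norm_num)
    obtain ⟨a, ha, hga⟩ := intermediate_value_Icc (by norm_num : (0:ℝ) ≤ 2) hc
      (show (0:ℝ) ∈ Set.Icc _ _ by
        constructor
        · norm_num
        · show (0:ℝ) ≤ 2 - 1 - Real.exp (-2)
          linarith)
    have hga' : a - 1 - Real.exp (-a) = 0 := hga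
    have hp := Real.exp_pos (-a)
    refine ⟨a, ⟨by linarith, by linarith⟩, ?_⟩
    rintro b ⟨hb, hgb⟩
    rcases le_total a b with h | h
    · linarith [aux_g _ _ h]
    · linarith [aux_g _ _ h]
  · intro a _ ha
    rw [tendsto_iff_norm_sub_tendsto_zero]
    refine squeeze_zero' (Filter.Eventually.of_forall fun _ => norm_nonneg _) ?_
      (tendsto_const_div_atTop_nhds_zero_nat (16:ℝ))
    filter_upwards [Filter.eventually_ge_atTop 3] with m hm
    obtain ⟨⟨h0, h1⟩, h⟩ := hQ m hm
    exact aux_main m hm (Q m) a h0 h1 h ha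
end

section
/- Let m ≥ 3 be an integer and Q_m ∈ (0,1) the unique root of 1 + Q^m − ((1−Q²)/2)m = 0 in (0,1). Then for every integer n ≥ 3 with n ≠ m one has 1 + Q_mⁿ − ((1−Q_m²)/2)n ≠ 0; more precisely, 1 + Q_mⁿ − ((1−Q_m²)/2)n > 0 for 3 ≤ n < m and < 0 for n > m. -/
/-- Non-resonance: if `m ≥ 3` and `Q ∈ (0,1)` satisfies
`1 + Q^m - ((1 - Q^2)/2) m = 0`, then for every integer `n ≥ 3` with `n ≠ m`
one has `1 + Q^n - ((1 - Q^2)/2) n ≠ 0`; more precisely it is positive for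
`3 ≤ n < m` and negative for `n > m`. -/
theorem dispersion_nonresonance (m : ℕ) (hm : 3 ≤ m) (Q : ℝ)
    (hQ : Q ∈ Set.Ioo (0:ℝ) 1)
    (hroot : 1 + Q ^ m - (1 - Q ^ 2) / 2 * m = 0) :
    ∀ n : ℕ, 3 ≤ n → n ≠ m →
      (1 + Q ^ n - (1 - Q ^ 2) / 2 * n ≠ 0) ∧
      (n < m → 0 < 1 + Q ^ n - (1 - Q ^ 2) / 2 * n) ∧
      (m < n → 1 + Q ^ n - (1 - Q ^ 2) / 2 * n < 0) := by
  obtain ⟨h0, h1⟩ := hQ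
  have hanti : StrictAnti (fun n : ℕ => 1 + Q ^ n - (1 - Q ^ 2) / 2 * (n : ℝ)) := by
    refine strictAnti_nat_of_succ_lt fun n => ?_
    have hp : 0 < Q ^ n := pow_pos h0 n
    have h2 : Q ^ (n + 1) < Q ^ n := by
      rw [pow_succ]
      nlinarith
    have h3 : Q ^ 2 < 1 := by nlinarith
    push_cast
    nlinarith
  intro n _ hne
  have hlt : n < m → 0 < 1 + Q ^ n - (1 - Q ^ 2) / 2 * (n : ℝ) := by
    intro h
    have := hanti h
    simp only at this
    linarith
  have hgt : m < n → 1 + Q ^ n - (1 - Q ^ 2) / 2 * (n : ℝ) < 0 := by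
    intro h
    have := hanti h
    simp only at this
    linarith
  refine ⟨?_, hlt, hgt⟩
  rcases lt_or_gt_of_ne hne with h | h
  · exact (hlt h).ne'
  · exact (hgt h).ne
end

section
/- Let m ≥ 3 be an integer and let Q = Q_m ∈ (0,1) satisfy 1 + Q^m − ((1−Q²)/2)m = 0. Let (a_n)_{n≥2} be a sequence of real numbers. Then the system [a₂ = 0, a₃ = 0, and (1 + Qⁿ − ((1−Q²)/2)n)·(a_{n+1} − Q a_{n−1}) = 0 for every n ≥ 3] holds if and only if there exists c ∈ ℝ such that a_{m+1+2k} = c·Q^k for every integer k ≥ 0 and a_n = 0 for every other index n ≥ 2. In particular the solution set is a one-dimensional real vector space, corresponding to the kernel functions c·w^{m+1}/(1 − Qw²) = c·Σ_{k≥0} Q^k w^{m+1+2k}. -/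
/-- Kernel characterization at a resonant `Q = Q_m`: for `m ≥ 3` and
`Q ∈ (0,1)` with `1 + Q^m - ((1-Q²)/2)m = 0`, a real sequence `(a_n)_{n≥2}`
satisfies the linear system `[a₂ = 0, a₃ = 0, and
`(1 + Qⁿ - ((1-Q²)/2)n)(a_{n+1} - Q a_{n-1}) = 0` for all `n ≥ 3]`
iff there is `c ∈ ℝ` with `a_{m+1+2k} = c Q^k` for all `k ≥ 0` and `a_n = 0`
for every other index `n ≥ 2` (so the solution set is one-dimensional,
corresponding to `c·w^{m+1}/(1 - Qw²)`). -/
theorem kernel_one_dimensional (m : ℕ) (hm : 3 ≤ m) (Q : ℝ)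
    (hQ : Q ∈ Set.Ioo (0:ℝ) 1)
    (hroot : 1 + Q ^ m - (1 - Q ^ 2) / 2 * m = 0) (a : ℕ → ℝ) :
    (a 2 = 0 ∧ a 3 = 0 ∧
      ∀ n : ℕ, 3 ≤ n →
        (1 + Q ^ n - (1 - Q ^ 2) / 2 * n) * (a (n + 1) - Q * a (n - 1)) = 0)
    ↔ ∃ c : ℝ, (∀ k : ℕ, a (m + 1 + 2 * k) = c * Q ^ k) ∧
        ∀ n : ℕ, 2 ≤ n → (∀ k : ℕ, n ≠ m + 1 + 2 * k) → a n = 0 := by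
  obtain ⟨h0, h1⟩ := hQ
  have hanti : StrictAnti (fun n : ℕ => 1 + Q ^ n - (1 - Q ^ 2) / 2 * (n : ℝ)) := by
    apply strictAnti_nat_of_succ_lt
    intro n
    have hp : 0 < Q ^ n := pow_pos h0 n
    have h2 : Q ^ 2 < 1 := by nlinarith
    have h3 : Q ^ (n + 1) < Q ^ n := by
      rw [pow_succ]; nlinarith
    push_cast
    nlinarith
  have hne : ∀ n : ℕ, n ≠ m → 1 + Q ^ n - (1 - Q ^ 2) / 2 * (n : ℝ) ≠ 0 := by
    intro n hn h
    exact hn (hanti.injective (h.trans hroot.symm))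
  constructor
  · rintro ⟨ha2, ha3, h⟩
    have hrec : ∀ n : ℕ, 2 ≤ n → n + 1 ≠ m → a (n + 2) = Q * a n := by
      intro n hn hnm
      have := (mul_eq_zero.mp (h (n + 1) (by omega))).resolve_left (hne _ hnm)
      have e : n + 1 - 1 = n := by omega
      rw [e] at this
      exact sub_eq_zero.mp this
    refine ⟨a (m + 1), ?_, ?_⟩
    · intro k
      induction k with
      | zero => simp
      | succ k ih =>
        have := hrec (m + 1 + 2 * k) (by omega) (by omega)
        rw [show m + 1 + 2 * (k + 1) = m + 1 + 2 * k + 2 by ring, this, ih]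
        ring
    · intro n
      induction n using Nat.strong_induction_on with
      | _ n ih =>
        intro hn hk
        by_cases e2 : n = 2
        · rw [e2, ha2]
        by_cases e3 : n = 3
        · rw [e3, ha3]
        obtain ⟨p, rfl⟩ : ∃ p, n = p + 2 := ⟨n - 2, by omega⟩
        have hk0 := hk 0
        rw [hrec p (by omega) (by omega), ih p (by omega) (by omega), mul_zero]
        intro k hh
        exact hk (k + 1) (by omega)
  · rintro ⟨c, hc, hz⟩
    refine ⟨hz 2 le_rfl (by intro k; omega), hz 3 (by omega) (by intro k; omega), ?_⟩
    intro n hn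
    by_cases hnm : n = m
    · rw [hnm, hroot, zero_mul]
    by_cases hk : ∃ k : ℕ, n - 1 = m + 1 + 2 * k
    · obtain ⟨k, hk⟩ := hk
      rw [hk, show n + 1 = m + 1 + 2 * (k + 1) by omega, hc, hc]
      ring
    · push Not at hk
      rw [hz (n - 1) (by omega) hk, hz (n + 1) (by omega)]
      · ring
      · intro k hh
        have : k ≠ 0 := by omega
        exact hk (k - 1) (by omega)
end

section
/- Let Q ∈ (0,1) and suppose 1 + Qⁿ − ((1−Q²)/2)n ≠ 0 for every integer n ≥ 3 (i.e. Q does not belong to the dispersion set 𝒮). Then for any sequence of real numbers (a_n)_{n≥2}, the system [a₂ = 0, a₃ = 0, and (1 + Qⁿ − ((1−Q²)/2)n)·(a_{n+1} − Q a_{n−1}) = 0 for every n ≥ 3] implies a_n = 0 for all n ≥ 2. Hence the kernel of the linearized operator at the ellipse of parameter Q is trivial when Q ∉ 𝒮. -/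
/-- Trivial kernel off the dispersion set: if `Q ∈ (0,1)` satisfies
`1 + Qⁿ - ((1-Q²)/2)n ≠ 0` for every integer `n ≥ 3`, then any real sequence
`(a_n)_{n≥2}` solving the system `[a₂ = 0, a₃ = 0, and
`(1 + Qⁿ - ((1-Q²)/2)n)(a_{n+1} - Q a_{n-1}) = 0` for all `n ≥ 3]` vanishes:
`a_n = 0` for all `n ≥ 2`. -/
theorem kernel_trivial_off_dispersion_set (Q : ℝ) (hQ : Q ∈ Set.Ioo (0:ℝ) 1)
    (hnores : ∀ n : ℕ, 3 ≤ n → 1 + Q ^ n - (1 - Q ^ 2) / 2 * n ≠ 0)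
    (a : ℕ → ℝ)
    (ha2 : a 2 = 0) (ha3 : a 3 = 0)
    (hsys : ∀ n : ℕ, 3 ≤ n →
      (1 + Q ^ n - (1 - Q ^ 2) / 2 * n) * (a (n + 1) - Q * a (n - 1)) = 0) :
    ∀ n : ℕ, 2 ≤ n → a n = 0 := by
  have key : ∀ n : ℕ, a (n + 2) = 0 ∧ a (n + 3) = 0 := by
    intro n
    induction n with
    | zero => exact ⟨ha2, ha3⟩
    | succ k ih =>
      refine ⟨ih.2, ?_⟩
      have h := (mul_eq_zero.mp (hsys (k + 3) (by omega))).resolve_left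
        (hnores (k + 3) (by omega))
      have e : k + 3 - 1 = k + 2 := by omega
      rw [e, ih.1, mul_zero, sub_zero] at h
      have e2 : k + 1 + 3 = k + 3 + 1 := by omega
      rw [e2]
      exact h
  intro n hn
  obtain ⟨k, rfl⟩ := Nat.exists_eq_add_of_le' hn
  exact (key k).1
end
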